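/- Let T be a rooted tree on the vertex set of a flow graph G. If T has the parent property and there exists a low-high order of T on G, then T has the sibling property, and hence T is the dominator tree of G. -/

import Mathlib

variable {V : Type*}

/-- `IsWalk A u v p`: `p` is a path from `u` to `v` in the digraph with arc
relation `A`, listing all of its vertices in order. -/
def IsWalk (A : V → V → Prop) (u v : V) (p : List V) : Prop :=
  p.Chain' A ∧ p.head? = some u ∧ p.getLast? = some v

/-- A flow graph: a directed graph with arc relation `A` and start vertex `s`
such that every vertex is reachable from `s` and no arc enters `s`. -/
structure FlowGraph (V : Type*) where
  A : V → V → Prop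
  s : V
  reach : ∀ v : V, ∃ p : List V, IsWalk A s v p
  no_enter : ∀ v : V, ¬ A v s

/-- `DomOn A s v w`: `v` lies on every path from `s` to `w` in the digraph with
arc relation `A`. -/
def DomOn (A : V → V → Prop) (s v w : V) : Prop :=
  ∀ p : List V, IsWalk A s w p → v ∈ p

/-- `v` dominates `w` in the flow graph `G`. -/
def FlowGraph.Dom (G : FlowGraph V) (v w : V) : Prop :=
  DomOn G.A G.s v w

/-- A rooted tree on vertex set `V`, given by a parent function: the root is a
fixed point of the parent function, and iterating the parent function from any
vertex eventually reaches the root. -/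
structure ParentTree (V : Type*) where
  parent : V → V
  root : V
  parent_root : parent root = root
  reaches_root : ∀ v : V, ∃ n : ℕ, parent^[n] v = root

/-- `T.Anc x y`: `x` is an ancestor of `y` in the rooted tree `T` (every vertex
is an ancestor of itself). -/
def ParentTree.Anc (T : ParentTree V) (x y : V) : Prop :=
  ∃ n : ℕ, T.parent^[n] y = x

/-- `T` has the parent property with respect to `G`: for every arc `(v, w)`,
the parent of `w` is an ancestor of `v` in `T`. -/
def ParentProperty (G : FlowGraph V) (T : ParentTree V) : Prop :=
  ∀ v w : V, G.A v w → T.Anc (T.parent w) v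

/-- The sibling property with respect to an arbitrary arc relation `A` with
start vertex `s`: no non-root vertex dominates a distinct vertex with the same
parent. -/
def SiblingPropertyOn (A : V → V → Prop) (s : V) (T : ParentTree V) : Prop :=
  ∀ v w : V, v ≠ T.root → w ≠ T.root → v ≠ w → T.parent v = T.parent w →
    ¬ DomOn A s v w

/-- `T` has the sibling property with respect to the flow graph `G`. -/
def SiblingProperty (G : FlowGraph V) (T : ParentTree V) : Prop :=
  SiblingPropertyOn G.A G.s T

/-- `T` is the dominator tree of the digraph with arc relation `A` and start
vertex `s`: `T` is rooted at `s`, and the parent of every vertex `v ≠ s` is its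
immediate dominator, i.e. a strict dominator of `v` that is dominated by every
strict dominator of `v`. -/
def IsDomTreeOn (A : V → V → Prop) (s : V) (T : ParentTree V) : Prop :=
  T.root = s ∧ ∀ v : V, v ≠ s →
    DomOn A s (T.parent v) v ∧ T.parent v ≠ v ∧
    ∀ u : V, DomOn A s u v → u ≠ v → DomOn A s u (T.parent v)

/-- `T` is the dominator tree of the flow graph `G`. -/
def IsDomTree (G : FlowGraph V) (T : ParentTree V) : Prop :=
  IsDomTreeOn G.A G.s T

/-- `ord` is (the numbering of) a preorder of the rooted tree `T`: an injective
numbering of the vertices such that for every vertex `v` the descendants of `v`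
are ordered consecutively, with `v` first. -/
def IsTreePreorder (T : ParentTree V) (ord : V → ℕ) : Prop :=
  Function.Injective ord ∧
  (∀ v x : V, T.Anc v x → ord v ≤ ord x) ∧
  (∀ v x y z : V, T.Anc v x → T.Anc v z → ord x ≤ ord y → ord y ≤ ord z →
    T.Anc v y)

/-- A preorder `ord` of `T` is low-high on the digraph with arc relation `A`
and start vertex `s`: for every `v ≠ s`, either `(t(v), v)` is an arc, or there
are arcs `(u, v)` and `(w, v)` with `u < v < w` in the order and `w` not a
descendant of `v` in `T`. -/
def LowHighOn (A : V → V → Prop) (s : V) (T : ParentTree V) (ord : V → ℕ) :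
    Prop :=
  IsTreePreorder T ord ∧
  ∀ v : V, v ≠ s → (A (T.parent v) v ∨
    ∃ u w : V, A u v ∧ A w v ∧ ord u < ord v ∧ ord v < ord w ∧ ¬ T.Anc v w)

/-- A low-high order of `T` on the flow graph `G`. -/
def LowHigh (G : FlowGraph V) (T : ParentTree V) (ord : V → ℕ) : Prop :=
  LowHighOn G.A G.s T ord

/-- `B` is (the arc relation of) a spanning tree of `G` rooted at `s`: a
subgraph of `G` in which no arc enters `s`, every vertex other than `s` has
exactly one entering arc, and every vertex is reachable from `s`. -/
def IsSpanningTree (G : FlowGraph V) (B : V → V → Prop) : Prop :=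
  (∀ u v : V, B u v → G.A u v) ∧
  (∀ v : V, ¬ B v G.s) ∧
  (∀ v : V, v ≠ G.s → ∃! u : V, B u v) ∧
  (∀ v : V, ∃ p : List V, IsWalk B G.s v p)

/-- Spanning trees `B` and `R` of `G` rooted at `s` are independent: for every
vertex `v`, the paths from `s` to `v` in `B` and in `R` have in common only
dominators of `v`. -/
def Independent (G : FlowGraph V) (B R : V → V → Prop) : Prop :=
  ∀ v : V, ∀ p q : List V, IsWalk B G.s v p → IsWalk R G.s v q →
    ∀ x : V, x ∈ p → x ∈ q → G.Dom x v

/-- Spanning trees `B` and `R` of `G` rooted at `s` are strongly independent: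
for every pair of vertices `v`, `w`, either the path from `s` to `v` in `B` and
the path from `s` to `w` in `R` have in common only common dominators of `v`
and `w`, or the same holds with the roles of `B` and `R` exchanged. -/
def StronglyIndependent (G : FlowGraph V) (B R : V → V → Prop) : Prop :=
  ∀ v w : V,
    (∀ p q : List V, IsWalk B G.s v p → IsWalk R G.s w q →
      ∀ x : V, x ∈ p → x ∈ q → G.Dom x v ∧ G.Dom x w) ∨
    (∀ p q : List V, IsWalk R G.s v p → IsWalk B G.s w q →
      ∀ x : V, x ∈ p → x ∈ q → G.Dom x v ∧ G.Dom x w)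

/-- `IsDerivedArcOf G T v b a`: `(a, b)` is the derived arc of the arc `(v, b)`
of `G` with respect to `T`: `b` is not an ancestor of `v` in `T`, and `a = v`
if `v` is the parent of `b`, while otherwise `a` is the sibling of `b` in `T`
that is an ancestor of `v`. -/
def IsDerivedArcOf (G : FlowGraph V) (T : ParentTree V) (v b a : V) : Prop :=
  G.A v b ∧ ¬ T.Anc b v ∧
    ((v = T.parent b ∧ a = v) ∨
     (v ≠ T.parent b ∧ a ≠ T.root ∧ T.parent a = T.parent b ∧ T.Anc a v))

/-- The arc relation of the derived graph of `G` with respect to `T`. -/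
def DerivedArc (G : FlowGraph V) (T : ParentTree V) (a b : V) : Prop :=
  ∃ v : V, IsDerivedArcOf G T v b a

/-- `S` is the vertex set of a strongly connected subgraph of the digraph with
arc relation `A`. -/
def StronglyConnectedSet (A : V → V → Prop) (S : Set V) : Prop :=
  S.Nonempty ∧ ∀ u ∈ S, ∀ v ∈ S, ∃ p : List V,
    IsWalk A u v p ∧ ∀ x ∈ p, x ∈ S

/-- `G` is reducible: every strongly connected subgraph has a single entry
vertex, i.e. a vertex of the subgraph contained in every path from `s` to a
vertex of the subgraph. -/
def Reducible (G : FlowGraph V) : Prop :=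
  ∀ S : Set V, StronglyConnectedSet G.A S →
    ∃ v ∈ S, ∀ u ∈ S, ∀ p : List V, IsWalk G.A G.s u p → v ∈ p

/-- A digraph is acyclic if it has no cycle (a path from a vertex to itself
with at least one arc). -/
def Acyclic (A : V → V → Prop) : Prop :=
  ¬ ∃ (v : V) (p : List V), IsWalk A v v p ∧ 2 ≤ p.length

/-- `IsHighWalk A ν u v p`: `p` is a high path from `u` to `v`: a path all of
whose vertices other than `u` and `v` are greater (in the numbering `ν`) than
both `u` and `v`. -/
def IsHighWalk (A : V → V → Prop) (ν : V → ℕ) (u v : V) (p : List V) : Prop :=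
  IsWalk A u v p ∧ ∀ x ∈ p, x ≠ u → x ≠ v → ν u < ν x ∧ ν v < ν x

namespace IsWalk

variable {A : V → V → Prop} {u v w : V} {p : List V}

theorem singleton (A : V → V → Prop) (u : V) : IsWalk A u u [u] :=
  ⟨List.isChain_singleton u, rfl, rfl⟩

theorem append_singleton (hp : IsWalk A u v p) (hvw : A v w) : IsWalk A u w (p ++ [w]) := by
  obtain ⟨hchain, hhead, hlast⟩ := hp
  refine ⟨List.isChain_append.2 ⟨hchain, List.isChain_singleton w, ?_⟩, ?_, ?_⟩
  · simpa [hlast] using hvw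
  · simp [List.head?_append, hhead]
  · simp

@[elab_as_elim]
theorem induction_on {motive : ∀ v p, IsWalk A u v p → Prop} (hp : IsWalk A u v p)
    (singleton : motive u [u] (IsWalk.singleton A u))
    (append_singleton : ∀ x y q (hq : IsWalk A u x q) (hxy : A x y), motive x q hq →
      motive y (q ++ [y]) (hq.append_singleton hxy)) :
    motive v p hp := by
  induction p using List.reverseRecOn generalizing v with
  | nil => simp [IsWalk] at hp
  | append_singleton q y ih =>
    have ⟨hchain, hhead, hlast⟩ := hp
    obtain rfl : y = v := by simpa using hlast
    rcases hq : q.getLast? with _ | x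
    · obtain rfl : q = [] := List.getLast?_eq_none_iff.1 hq
      obtain rfl : y = u := by simpa using hhead
      exact singleton
    · obtain ⟨hqchain, -, hstep⟩ := List.isChain_append.1 hchain
      have hne : q ≠ [] := by rintro rfl; simp at hq
      have hwalk : IsWalk A u x q :=
        ⟨hqchain, by rwa [List.head?_append_of_ne_nil _ hne] at hhead, hq⟩
      exact append_singleton x y q hwalk (hstep x hq y rfl) (ih hwalk)

end IsWalk

namespace DomOn

variable {A : V → V → Prop} {s u v w : V}

theorem eq_start (h : DomOn A s u s) : u = s :=
  List.mem_singleton.1 (h [s] (IsWalk.singleton A s))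

theorem of_arc (h : DomOn A s u w) (hne : u ≠ w) (hvw : A v w) : DomOn A s u v :=
  fun _ hp => (List.mem_append.1 (h _ (hp.append_singleton hvw))).resolve_right
    (mt List.mem_singleton.1 hne)

end DomOn

namespace ParentTree

variable {T : ParentTree V} {u v w : V}

theorem Anc.refl (T : ParentTree V) (v : V) : T.Anc v v := ⟨0, rfl⟩

theorem anc_parent (T : ParentTree V) (v : V) : T.Anc (T.parent v) v := ⟨1, rfl⟩

theorem root_anc (T : ParentTree V) (v : V) : T.Anc T.root v := T.reaches_root v

theorem Anc.trans (huv : T.Anc u v) (hvw : T.Anc v w) : T.Anc u w := by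
  obtain ⟨m, rfl⟩ := huv
  obtain ⟨n, rfl⟩ := hvw
  exact ⟨m + n, Function.iterate_add_apply _ _ _ _⟩

theorem Anc.eq_or_anc_parent (h : T.Anc u v) : u = v ∨ T.Anc u (T.parent v) := by
  obtain ⟨_ | n, rfl⟩ := h
  · exact Or.inl rfl
  · exact Or.inr ⟨n, rfl⟩

theorem Anc.eq_root (h : T.Anc u T.root) : u = T.root := by
  obtain ⟨n, rfl⟩ := h
  exact Function.iterate_fixed T.parent_root n

theorem not_anc_parent (hv : v ≠ T.root) : ¬ T.Anc v (T.parent v) := by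
  rintro ⟨n, hn⟩
  obtain ⟨m, hm⟩ := T.reaches_root v
  have hperiodic : T.parent^[n * m + m] v = v := by
    have h : Function.IsPeriodicPt T.parent (n + 1) v := hn
    exact add_one_mul n m ▸ h.mul_const m
  refine hv ?_
  rw [← hperiodic, Function.iterate_add_apply, hm, Function.iterate_fixed T.parent_root]

theorem parent_ne (hv : v ≠ T.root) : T.parent v ≠ v := fun h =>
  not_anc_parent hv (h.symm ▸ Anc.refl T v)

end ParentTree

section Dominators

variable {A : V → V → Prop} {T : ParentTree V} {ord : V → ℕ} {u v : V}

theorem domOn_of_anc (hpp : ∀ x y, A x y → T.Anc (T.parent y) x) (huv : T.Anc u v) :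
    DomOn A T.root u v := by
  intro p hp
  induction hp using IsWalk.induction_on with
  | singleton => exact List.mem_singleton.2 huv.eq_root
  | append_singleton x y q _ hxy ih =>
    rcases huv.eq_or_anc_parent with rfl | hparent
    · exact List.mem_append_right q (List.mem_singleton_self u)
    · exact List.mem_append_left [y] (ih (hparent.trans (hpp x y hxy)))

theorem IsTreePreorder.parent_lt (h : IsTreePreorder T ord) (hv : v ≠ T.root) :
    ord (T.parent v) < ord v :=
  lt_of_le_of_ne (h.2.1 _ _ (T.anc_parent v)) (h.1.ne (ParentTree.parent_ne hv))

theorem IsTreePreorder.anc_of_le_of_le (h : IsTreePreorder T ord) {w : V} (huw : T.Anc u w)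
    (huv : ord u ≤ ord v) (hvw : ord v ≤ ord w) : T.Anc u v :=
  h.2.2 u u v w (.refl T u) huw huv hvw

theorem LowHighOn.exists_arc_lt (h : LowHighOn A T.root T ord) (hv : v ≠ T.root) :
    ∃ u, A u v ∧ ord u < ord v := by
  rcases h.2 v hv with harc | ⟨u, -, huv, -, hlt, -, -⟩
  · exact ⟨T.parent v, harc, h.1.parent_lt hv⟩
  · exact ⟨u, huv, hlt⟩

theorem LowHighOn.le_of_domOn (h : LowHighOn A T.root T ord) (hdom : DomOn A T.root u v) :
    ord u ≤ ord v := by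
  induction v using (measure ord).wf.induction with
  | _ v ih =>
    by_cases huv : u = v
    · exact huv ▸ le_rfl
    have hv : v ≠ T.root := by rintro rfl; exact huv hdom.eq_start
    obtain ⟨x, hxv, hlt⟩ := h.exists_arc_lt hv
    exact (ih x hlt (hdom.of_arc huv hxv)).trans hlt.le

theorem LowHighOn.arc_parent_or_exists_domOn_gt (h : LowHighOn A T.root T ord)
    (hdom : DomOn A T.root u v) (hanc : ¬ T.Anc u v) :
    A (T.parent v) v ∨
      ∃ w, DomOn A T.root u w ∧ ¬ T.Anc u w ∧ ord v < ord w ∧ ¬ T.Anc v w := by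
  have hne : u ≠ v := by rintro rfl; exact hanc (.refl T u)
  have hv : v ≠ T.root := by rintro rfl; exact hne hdom.eq_start
  refine (h.2 v hv).imp_right ?_
  rintro ⟨-, w, -, hwv, -, hlt, hvw⟩
  refine ⟨w, hdom.of_arc hne hwv, fun huw => hanc ?_, hlt, hvw⟩
  exact h.1.anc_of_le_of_le huw (h.le_of_domOn hdom) hlt.le

-- Among the vertices dominated by `u` but not descended from `u`, take the last one, `x`. Then every
-- ancestor `y` of `x` has an arc from its parent, so `u` dominates the root: otherwise the low-high
-- property gives an arc into `y` from another such vertex, which is after `y` and not a descendant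
-- of `y`, hence after `x`.
theorem LowHighOn.anc_of_domOn [Finite V] (h : LowHighOn A T.root T ord)
    (hdom : DomOn A T.root u v) : T.Anc u v := by
  by_contra hanc
  obtain ⟨x, ⟨hux, hnux⟩, hmax⟩ :=
    Set.exists_max_image {y | DomOn A T.root u y ∧ ¬ T.Anc u y} ord (Set.toFinite _)
      ⟨v, hdom, hanc⟩
  have hstep : ∀ y, T.Anc y x → DomOn A T.root u y → DomOn A T.root u (T.parent y) := by
    intro y hyx huy
    have hnuy : ¬ T.Anc u y := fun hanc => hnux (hanc.trans hyx)
    have hne : u ≠ y := by rintro rfl; exact hnuy (.refl T u)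
    rcases h.arc_parent_or_exists_domOn_gt huy hnuy with harc | ⟨w, huw, hnuw, hlt, hnyw⟩
    · exact huy.of_arc hne harc
    · have hwx : ord w ≤ ord x := hmax w ⟨huw, hnuw⟩
      exact absurd (h.1.anc_of_le_of_le hyx hlt.le hwx) hnyw
  have hiterate : ∀ n, DomOn A T.root u (T.parent^[n] x) := by
    intro n
    induction n with
    | zero => exact hux
    | succ n ih =>
      rw [Function.iterate_succ_apply']
      exact hstep _ ⟨n, rfl⟩ ih
  obtain ⟨n, hn⟩ := T.reaches_root x
  have hroot : u = T.root := (hn ▸ hiterate n : DomOn A T.root u T.root).eq_start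
  exact hnux (hroot ▸ T.root_anc x)

theorem siblingPropertyOn_of_anc_of_domOn {s : V} (h : ∀ u v, DomOn A s u v → T.Anc u v) :
    SiblingPropertyOn A s T := by
  intro v w hv _ hne hparent hdom
  have hanc : T.Anc v (T.parent w) := (h v w hdom).eq_or_anc_parent.resolve_left hne
  exact ParentTree.not_anc_parent hv (hparent ▸ hanc)

theorem isDomTreeOn_of_domOn_iff_anc (h : ∀ u v, DomOn A T.root u v ↔ T.Anc u v) :
    IsDomTreeOn A T.root T := by
  refine ⟨rfl, fun v hv => ⟨(h _ _).2 (T.anc_parent v), ParentTree.parent_ne hv, ?_⟩⟩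
  intro u hdom hne
  exact (h _ _).2 (((h u v).1 hdom).eq_or_anc_parent.resolve_left hne)

end Dominators

/-- If `T` has the parent property and there exists a low-high order of `T` on
`G`, then `T` has the sibling property, and hence `T` is the dominator tree of
`G`. -/
theorem stmt7 [Fintype V] (G : FlowGraph V) (T : ParentTree V)
    (hroot : T.root = G.s) (hpp : ParentProperty G T)
    (hlh : ∃ ord : V → ℕ, LowHigh G T ord) :
    SiblingProperty G T ∧ IsDomTree G T := by
  obtain ⟨ord, hlh⟩ := hlh
  rw [LowHigh, ← hroot] at hlh
  rw [SiblingProperty, IsDomTree, ← hroot]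
  have hdom (u v : V) : DomOn G.A T.root u v ↔ T.Anc u v :=
    ⟨hlh.anc_of_domOn, domOn_of_anc hpp⟩
  exact ⟨siblingPropertyOn_of_anc_of_domOn fun u v => (hdom u v).1,
    isDomTreeOn_of_domOn_iff_anc hdom⟩
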